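/- Every quantitative multiplayer reachability game with tuples of positive costs on edges has a finite-memory Nash equilibrium. -/

import Mathlib

/-- A quantitative multiplayer reachability game: a finite directed graph whose
vertex set is partitioned among the players (via `owner`), with an initial vertex `v0`,
an edge relation `E` such that every vertex has an outgoing edge, and a goal set
`goal i` for each player `i`. -/
structure ReachGame (P : Type) (V : Type) where
  owner : V → P
  v0 : V
  E : V → V → Prop
  total : ∀ v : V, ∃ w : V, E v w
  goal : P → Set V

namespace ReachGame

variable {P V : Type} [DecidableEq P] (G : ReachGame P V)

/-- The last vertex of a history (with default `v0`). -/
def lastV (h : List V) : V := h.getLastD G.v0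

/-- A history: a nonempty finite path in the graph starting at `v0`. -/
def IsHistory (h : List V) : Prop :=
  h ≠ [] ∧ h.head? = some G.v0 ∧ List.Chain' G.E h

/-- A play: an infinite path starting at `v0`. -/
def IsPlay (ρ : ℕ → V) : Prop :=
  ρ 0 = G.v0 ∧ ∀ k : ℕ, G.E (ρ k) (ρ (k + 1))

/-- `σ` is a (total encoding of a) strategy of player `i`: on every history ending in
a vertex owned by `i` it chooses a successor along an edge. -/
def IsStrategy (i : P) (σ : List V → V) : Prop :=
  ∀ h : List V, G.IsHistory h → G.owner (G.lastV h) = i → G.E (G.lastV h) (σ h)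

/-- A strategy profile: one strategy per player. -/
def IsProfile (prof : P → List V → V) : Prop :=
  ∀ i : P, G.IsStrategy i (prof i)

/-- The history of length `n` (i.e. with `n` edges) obtained by letting the players
follow the profile `prof` from `v0`. -/
def outHist (prof : P → List V → V) : ℕ → List V
  | 0 => [G.v0]
  | n + 1 => outHist prof n ++ [prof (G.owner (G.lastV (outHist prof n))) (outHist prof n)]

/-- The outcome play of the strategy profile `prof`. -/
def outcome (prof : P → List V → V) (n : ℕ) : V :=
  G.lastV (G.outHist prof n)

/-- The cost of player `i` for the play `ρ`: the least `l` with `ρ l ∈ goal i`,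
and `⊤` (`+∞`) if there is no such `l`. -/
noncomputable def cost (i : P) (ρ : ℕ → V) : ℕ∞ :=
  sInf {n : ℕ∞ | ∃ l : ℕ, n = (l : ℕ∞) ∧ ρ l ∈ G.goal i}

/-- Nash equilibrium: no player can strictly decrease his cost by a unilateral
deviation. -/
def IsNash (prof : P → List V → V) : Prop :=
  ∀ (j : P) (σ' : List V → V), G.IsStrategy j σ' →
    G.cost j (G.outcome prof) ≤ G.cost j (G.outcome (Function.update prof j σ'))

/-- `h ≈_σ h'` : the strategy `σ` of player `i` behaves the same after `h` and `h'`,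
i.e. `σ (h ++ δ) = σ (h' ++ δ)` for every suffix `δ` making both `h ++ δ` and
`h' ++ δ` histories ending in a vertex of player `i`. -/
def MemEq (i : P) (σ : List V → V) (h h' : List V) : Prop :=
  ∀ δ : List V,
    G.IsHistory (h ++ δ) → G.owner (G.lastV (h ++ δ)) = i →
    G.IsHistory (h' ++ δ) → G.owner (G.lastV (h' ++ δ)) = i →
    σ (h ++ δ) = σ (h' ++ δ)

/-- A strategy of player `i` is finite-memory if the relation `≈_σ` has finitely many
equivalence classes on histories, i.e. there is a finite set of histories meeting
every class. -/
def FiniteMemory (i : P) (σ : List V → V) : Prop :=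
  ∃ S : Finset (List V), ∀ h : List V, G.IsHistory h →
    ∃ h' ∈ S, G.IsHistory h' ∧ G.MemEq i σ h h'

/-- A profile is finite-memory if each of its strategies is. -/
def FiniteMemoryProfile (prof : P → List V → V) : Prop :=
  ∀ i : P, G.FiniteMemory i (prof i)

/-- `Visit h`: the set of players whose goal set is visited by the finite path `h`. -/
def visitL (h : List V) : Set P := {i : P | ∃ v ∈ h, v ∈ G.goal i}

/-- The type of a strategy profile: the set of players whose goal set is visited by
the outcome. -/
def typeOf (prof : P → List V → V) : Set P :=
  {i : P | ∃ l : ℕ, G.outcome prof l ∈ G.goal i}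

/-! ### The truncated game `G^d` -/

/-- A strategy of player `i` in the truncated game `G^d` : it chooses a successor on
every history with less than `d` edges (list length `≤ d`) ending in a vertex of `i`. -/
def IsStrategyTrunc (d : ℕ) (i : P) (σ : List V → V) : Prop :=
  ∀ h : List V, G.IsHistory h → h.length ≤ d → G.owner (G.lastV h) = i →
    G.E (G.lastV h) (σ h)

/-- A strategy profile of the truncated game `G^d`. -/
def IsProfileTrunc (d : ℕ) (prof : P → List V → V) : Prop :=
  ∀ i : P, G.IsStrategyTrunc d i (prof i)

/-- The cost of player `i` for a finite play `h` (a list of vertices): the least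
position of `h` lying in `goal i`, and `⊤` if `goal i` is not visited. -/
noncomputable def costList (i : P) (h : List V) : ℕ∞ :=
  sInf {n : ℕ∞ | ∃ l : ℕ, n = (l : ℕ∞) ∧ l < h.length ∧ h.getD l G.v0 ∈ G.goal i}

/-- Nash equilibrium of the truncated game `G^d` (whose plays are the histories with
exactly `d` edges). -/
def IsNashTrunc (d : ℕ) (prof : P → List V → V) : Prop :=
  ∀ (j : P) (σ' : List V → V), G.IsStrategyTrunc d j σ' →
    G.costList j (G.outHist prof d) ≤
      G.costList j (G.outHist (Function.update prof j σ') d)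

/-- The type of a strategy profile of the truncated game `G^d`. -/
def typeOfTrunc (d : ℕ) (prof : P → List V → V) : Set P :=
  G.visitL (G.outHist prof d)

end ReachGame

namespace ReachGame

open Classical in
/-- The cost of player `i` for the play `ρ` in the game with cost functions
`c i` on edges: the sum `Σ_{k=1}^{l} c i (ρ_{k-1}, ρ_k)` where `l` is the least
index with `ρ l ∈ F_i`, and `⊤` (`+∞`) if `F_i` is never visited. -/
noncomputable def wCost {P V : Type} (G : ReachGame P V) (c : P → V → V → ℝ)
    (i : P) (ρ : ℕ → V) : WithTop ℝ :=
  if h : ∃ l : ℕ, ρ l ∈ G.goal i ∧ ∀ m : ℕ, m < l → ρ m ∉ G.goal i then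
    ((∑ k ∈ Finset.range h.choose, c i (ρ k) (ρ (k + 1)) : ℝ) : WithTop ℝ)
  else ⊤

end ReachGame

open scoped ENNReal

namespace ReachGame

/-- A fixpoint of the Bellman operator of the zero-sum game of player `j` against the others. -/
lemma exists_val {P V : Type} (G : ReachGame P V) (c : P → V → V → ℝ) (j : P) :
    ∃ f : V → ℝ≥0∞, (∀ v ∈ G.goal j, f v = 0) ∧
      (∀ v ∉ G.goal j, G.owner v = j →
        f v = ⨅ w : {w // G.E v w}, (ENNReal.ofReal (c j v w) + f w)) ∧
      (∀ v ∉ G.goal j, G.owner v ≠ j →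
        f v = ⨆ w : {w // G.E v w}, (ENNReal.ofReal (c j v w) + f w)) := by
  classical
  let T : (V → ℝ≥0∞) →o (V → ℝ≥0∞) :=
    { toFun := fun f v => if v ∈ G.goal j then 0 else
        if G.owner v = j then ⨅ w : {w // G.E v w}, (ENNReal.ofReal (c j v w) + f w)
        else ⨆ w : {w // G.E v w}, (ENNReal.ofReal (c j v w) + f w)
      monotone' := by
        intro f g hfg v
        dsimp only
        split_ifs
        · exact le_rfl
        · exact iInf_mono fun w => add_le_add le_rfl (hfg _)
        · exact iSup_mono fun w => add_le_add le_rfl (hfg _) }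
  have hT : ∀ v, T.lfp v = T T.lfp v := fun v => by rw [T.map_lfp]
  refine ⟨T.lfp, fun v hv => ?_, fun v hv ho => ?_, fun v hv ho => ?_⟩
  · exact (hT v).trans (if_pos hv)
  · exact (hT v).trans ((if_neg hv).trans (if_pos ho))
  · exact (hT v).trans ((if_neg hv).trans (if_neg ho))

/-- Memory update: remember the first deviator from the positional profile `s`. -/
def mstep {P V : Type} [DecidableEq V] (G : ReachGame P V) (s : V → V) (q : Option P × V) (w : V) :
    Option P × V :=
  (match q.1 with
    | none => if w = s q.2 then none else some (G.owner q.2)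
    | some j => some j, w)

/-- Memory state after a history. -/
def mstate {P V : Type} [DecidableEq V] (G : ReachGame P V) (s : V → V) (h : List V) :
    Option P × V :=
  h.tail.foldl (G.mstep s) (none, G.v0)

/-- Action: follow `s` if nobody deviated, otherwise punish. -/
def mact {P V : Type} (s : V → V) (t : P → V → V) (q : Option P × V) : V :=
  match q.1 with
  | none => s q.2
  | some j => t j q.2

lemma mstate_append {P V : Type} [DecidableEq V] (G : ReachGame P V) (s : V → V) (h δ : List V)
    (hh : h ≠ []) : G.mstate s (h ++ δ) = δ.foldl (G.mstep s) (G.mstate s h) := by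
  cases h with
  | nil => exact absurd rfl hh
  | cons a l => simp [mstate]

lemma lastV_snoc {P V : Type} (G : ReachGame P V) (h : List V) (w : V) :
    G.lastV (h ++ [w]) = w := by
  simp [lastV]

lemma mstate_snd {P V : Type} [DecidableEq V] (G : ReachGame P V) (s : V → V) (h : List V)
    (hh : G.IsHistory h) : (G.mstate s h).2 = G.lastV h := by
  rcases List.eq_nil_or_concat h with rfl | ⟨l, a, rfl⟩
  · exact absurd rfl hh.1
  · rw [List.concat_eq_append] at *
    rw [lastV_snoc]
    cases l with
    | nil =>
      have := hh.2.1
      simp at this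
      simp [mstate, this]
    | cons b l => rw [mstate_append _ _ _ _ (by simp)]; simp [mstep]

lemma isHistory_snoc {P V : Type} (G : ReachGame P V) (h : List V) (w : V)
    (hh : G.IsHistory h) (hw : G.E (G.lastV h) w) : G.IsHistory (h ++ [w]) := by
  obtain ⟨h1, h2, h3⟩ := hh
  refine ⟨by simp, ?_, ?_⟩
  · rw [List.head?_append, h2]; rfl
  · refine List.isChain_append.2 ⟨h3, by simp, ?_⟩
    intro x hx y hy
    simp at hy
    subst hy
    have : G.lastV h = x := by
      simp only [lastV]
      rw [List.getLastD_eq_getLast?]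
      simp only [Option.mem_def] at hx
      rw [hx]; rfl
    rw [← this]; exact hw

lemma outHist_isHistory {P V : Type} (G : ReachGame P V) (prof : P → List V → V)
    (hp : G.IsProfile prof) (n : ℕ) : G.IsHistory (G.outHist prof n) := by
  induction n with
  | zero => simp [outHist, IsHistory, List.Chain']
  | succ n ih => exact isHistory_snoc _ _ _ ih (hp _ _ ih rfl)

lemma outcome_succ {P V : Type} (G : ReachGame P V) (prof : P → List V → V) (n : ℕ) :
    G.outcome prof (n + 1) = prof (G.owner (G.outcome prof n)) (G.outHist prof n) := by
  simp [outcome, outHist, lastV_snoc]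

lemma outcome_edge {P V : Type} (G : ReachGame P V) (prof : P → List V → V)
    (hp : G.IsProfile prof) (n : ℕ) : G.E (G.outcome prof n) (G.outcome prof (n + 1)) := by
  rw [outcome_succ]
  exact hp _ _ (outHist_isHistory G prof hp n) rfl

lemma mstate_outHist_succ {P V : Type} [DecidableEq V] (G : ReachGame P V) (s : V → V)
    (prof : P → List V → V) (hp : G.IsProfile prof) (n : ℕ) :
    G.mstate s (G.outHist prof (n + 1)) =
      G.mstep s (G.mstate s (G.outHist prof n)) (G.outcome prof (n + 1)) := by
  rw [outcome_succ]
  simp only [outHist]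
  rw [mstate_append _ _ _ _ (outHist_isHistory G prof hp n).1]
  rfl

lemma wCost_of_hit {P V : Type} (G : ReachGame P V) (c : P → V → V → ℝ) (i : P) (ρ : ℕ → V)
    (l : ℕ) (hl : ρ l ∈ G.goal i) (hm : ∀ m < l, ρ m ∉ G.goal i) :
    G.wCost c i ρ = ((∑ k ∈ Finset.range l, c i (ρ k) (ρ (k + 1)) : ℝ) : WithTop ℝ) := by
  have h : ∃ l : ℕ, ρ l ∈ G.goal i ∧ ∀ m : ℕ, m < l → ρ m ∉ G.goal i := ⟨l, hl, hm⟩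
  have hh := h.choose_spec
  have : h.choose = l := by
    rcases lt_trichotomy h.choose l with h1 | h1 | h1
    · exact absurd hh.1 (hm _ h1)
    · exact h1
    · exact absurd hl (hh.2 _ h1)
  rw [wCost, dif_pos h, this]

/-- Along a play on which the potential decreases, the cost is bounded by the potential. -/
lemma cost_le_potential {P V : Type} [Finite V] (G : ReachGame P V) (c : P → V → V → ℝ)
    (hc : ∀ (i : P) (v w : V), G.E v w → 0 < c i v w) (j : P) (f : V → ℝ≥0∞)
    (ρ : ℕ → V) (hE : ∀ k, G.E (ρ k) (ρ (k + 1)))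
    (hf : ∀ k, ρ k ∉ G.goal j →
      ENNReal.ofReal (c j (ρ k) (ρ (k + 1))) + f (ρ (k + 1)) ≤ f (ρ k)) :
    (∃ L, ρ L ∈ G.goal j ∧ (∀ m < L, ρ m ∉ G.goal j) ∧
      ∀ n ≤ L, ∑ k ∈ Finset.range L, ENNReal.ofReal (c j (ρ k) (ρ (k + 1))) ≤
        ∑ k ∈ Finset.range n, ENNReal.ofReal (c j (ρ k) (ρ (k + 1))) + f (ρ n)) ∨
    ((∀ n, ρ n ∉ G.goal j) ∧ ∀ n, f (ρ n) = ⊤) := by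
  classical
  by_cases h : ∃ L, ρ L ∈ G.goal j
  · left
    refine ⟨Nat.find h, Nat.find_spec h, fun m hm => Nat.find_min h hm, fun n hn => ?_⟩
    refine Nat.decreasingInduction' (P := fun n =>
      ∑ k ∈ Finset.range (Nat.find h), ENNReal.ofReal (c j (ρ k) (ρ (k + 1))) ≤
        ∑ k ∈ Finset.range n, ENNReal.ofReal (c j (ρ k) (ρ (k + 1))) + f (ρ n)) ?_ hn le_self_add
    intro k hk _ ih
    refine ih.trans ?_
    rw [Finset.sum_range_succ, add_assoc]
    exact add_le_add le_rfl (hf k (Nat.find_min h hk))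
  · right
    push Not at h
    refine ⟨h, fun n => ?_⟩
    by_contra hn
    have hfin : ∀ k, f (ρ (n + k)) ≠ ⊤ := by
      intro k
      induction k with
      | zero => exact hn
      | succ k ih => exact ne_top_of_le_ne_top ih (le_add_self.trans (hf (n + k) (h _)))
    have hanti : StrictAnti fun k => f (ρ (n + k)) := by
      refine strictAnti_nat_of_succ_lt fun k => ?_
      refine lt_of_lt_of_le ?_ (hf (n + k) (h _))
      rw [add_comm (ENNReal.ofReal _)]
      exact ENNReal.lt_add_right (hfin (k + 1))
        (ENNReal.ofReal_pos.2 (hc _ _ _ (hE _))).ne'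
    have hinj : Function.Injective fun k => ρ (n + k) := fun a b hab =>
      hanti.injective (congrArg f hab)
    exact not_injective_infinite_finite _ hinj

end ReachGame

open ReachGame in
/-- Every quantitative multiplayer reachability game with tuples of
positive costs on edges has a finite-memory Nash equilibrium. -/
theorem exists_finiteMemory_nash_weighted {P V : Type} [Fintype P] [DecidableEq P]
    [Fintype V] (G : ReachGame P V)
    (c : P → V → V → ℝ) (hc : ∀ (i : P) (v w : V), G.E v w → 0 < c i v w) :
    ∃ prof : P → List V → V,
      G.IsProfile prof ∧ G.FiniteMemoryProfile prof ∧
      ∀ (j : P) (σ' : List V → V), G.IsStrategy j σ' →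
        G.wCost c j (G.outcome prof) ≤
          G.wCost c j (G.outcome (Function.update prof j σ')) := by
  classical
  choose f hf0 hfmin hfmax using exists_val G c
  -- positional optimal strategies
  have hs : ∀ v, ∃ w, G.E v w ∧ (v ∉ G.goal (G.owner v) →
      ENNReal.ofReal (c (G.owner v) v w) + f (G.owner v) w = f (G.owner v) v) := by
    intro v
    haveI : Nonempty {w // G.E v w} := let ⟨w, hw⟩ := G.total v; ⟨⟨w, hw⟩⟩
    obtain ⟨w, hw⟩ := exists_eq_ciInf_of_finite (f := fun w : {w // G.E v w} =>
      ENNReal.ofReal (c (G.owner v) v w) + f (G.owner v) w)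
    exact ⟨w, w.2, fun hv => by rw [hfmin _ _ hv rfl]; exact hw⟩
  -- positional punishing strategies
  have ht : ∀ j v, ∃ w, G.E v w ∧ (v ∉ G.goal j → G.owner v ≠ j →
      ENNReal.ofReal (c j v w) + f j w = f j v) := by
    intro j v
    haveI : Nonempty {w // G.E v w} := let ⟨w, hw⟩ := G.total v; ⟨⟨w, hw⟩⟩
    obtain ⟨w, hw⟩ := exists_eq_ciSup_of_finite (f := fun w : {w // G.E v w} =>
      ENNReal.ofReal (c j v w) + f j w)
    exact ⟨w, w.2, fun hv ho => by rw [hfmax _ _ hv ho]; exact hw⟩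
  choose s hsE hsv using hs
  choose t htE htv using ht
  have hactE : ∀ q : Option P × V, G.E q.2 (mact s t q) := by
    rintro ⟨_ | j, v⟩
    · exact hsE v
    · exact htE j v
  let prof : P → List V → V := fun _ h => mact s t (G.mstate s h)
  have hprof : G.IsProfile prof := by
    intro i h hh _
    rw [← mstate_snd G s h hh]
    exact hactE _
  refine ⟨prof, hprof, ?_, ?_⟩
  · -- finite memory
    intro i
    have hfin : (Set.range fun h : {h // G.IsHistory h} => G.mstate s h.1).Finite :=
      Set.toFinite _
    let rep : Option P × V → List V := fun q =>
      if hq : ∃ h, G.IsHistory h ∧ G.mstate s h = q then hq.choose else []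
    refine ⟨Finset.univ.image rep, fun h hh => ⟨rep (G.mstate s h), by simp, ?_⟩⟩
    have hq : ∃ h', G.IsHistory h' ∧ G.mstate s h' = G.mstate s h := ⟨h, hh, rfl⟩
    have hr : rep (G.mstate s h) = hq.choose := dif_pos hq
    rw [hr]
    obtain ⟨h1, h2⟩ := hq.choose_spec
    refine ⟨h1, fun δ _ _ _ _ => ?_⟩
    simp only [prof]
    rw [mstate_append _ _ _ _ hh.1, mstate_append _ _ _ _ h1.1, h2]
  · intro j σ' hσ'
    set ρ := G.outcome prof with hρ
    set prof' := Function.update prof j σ' with hprof'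
    set π := G.outcome prof' with hπ
    have hp' : G.IsProfile prof' := by
      intro i
      by_cases hij : i = j
      · subst hij; simpa [prof'] using hσ'
      · simpa [prof', hij] using hprof i
    have hsnd : ∀ n, (G.mstate s (G.outHist prof' n)).2 = π n := fun n =>
      mstate_snd G s _ (outHist_isHistory G prof' hp' n)
    have hπE : ∀ k, G.E (π k) (π (k + 1)) := outcome_edge G prof' hp'
    have hρE : ∀ k, G.E (ρ k) (ρ (k + 1)) := outcome_edge G prof hprof
    have key : ∀ k, (G.mstate s (G.outHist prof k)).1 = none → ρ (k + 1) = s (ρ k) := by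
      intro k h
      have h2 := mstate_snd G s _ (outHist_isHistory G prof hprof k)
      rw [hρ, outcome_succ]
      change mact s t (G.mstate s (G.outHist prof k)) = s (G.lastV (G.outHist prof k))
      rw [← h2]
      simp only [mact, h]
    have hρs : ∀ k, (G.mstate s (G.outHist prof k)).1 = none ∧ ρ (k + 1) = s (ρ k) := by
      intro k
      induction k with
      | zero => exact ⟨rfl, key 0 rfl⟩
      | succ k ih' =>
        have : (G.mstate s (G.outHist prof (k + 1))).1 = none := by
          have h2 := mstate_snd G s _ (outHist_isHistory G prof hprof k)
          rw [mstate_outHist_succ G s prof hprof]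
          simp only [mstep, ih'.1]
          rw [h2, if_pos]
          exact ih'.2
        exact ⟨this, key _ this⟩
    have hpot := cost_le_potential G c hc j (f j) ρ hρE (by
      intro k hk
      by_cases ho : G.owner (ρ k) = j
      · rw [(hρs k).2]
        have := hsv (ρ k)
        rw [ho] at this
        exact (this hk).le
      · rw [hfmax j _ hk ho]
        exact le_iSup (fun w : {w // G.E (ρ k) w} =>
          ENNReal.ofReal (c j (ρ k) w) + f j w) ⟨_, hρE k⟩)
    -- the deviating play
    by_cases hhit : ∃ l, π l ∈ G.goal j
    swap
    · have : G.wCost c j π = ⊤ := by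
        rw [wCost, dif_neg]
        rintro ⟨l, hl, _⟩
        exact hhit ⟨l, hl⟩
      rw [this]; exact le_top
    set l := Nat.find hhit with hl
    have hlg : π l ∈ G.goal j := Nat.find_spec hhit
    have hlm : ∀ m < l, π m ∉ G.goal j := fun m hm => Nat.find_min hhit hm
    rw [wCost_of_hit G c j π l hlg hlm]
    obtain ⟨K, hK1, hK2⟩ : ∃ K : ℝ≥0∞,
        (∀ n, (∀ m < n, ρ m ∉ G.goal j) →
          K ≤ ∑ k ∈ Finset.range n, ENNReal.ofReal (c j (ρ k) (ρ (k + 1))) + f j (ρ n)) ∧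
        (K ≠ ⊤ → ∃ L, ρ L ∈ G.goal j ∧ (∀ m < L, ρ m ∉ G.goal j) ∧
          K = ∑ k ∈ Finset.range L, ENNReal.ofReal (c j (ρ k) (ρ (k + 1)))) := by
      rcases hpot with ⟨L, h1, h2, h3⟩ | ⟨_, h2⟩
      · exact ⟨_, fun n hn => h3 n (not_lt.1 fun h => hn _ h h1), fun _ => ⟨L, h1, h2, rfl⟩⟩
      · exact ⟨⊤, fun n _ => by simp [h2 n], fun h => absurd rfl h⟩
    have main : ∀ n ≤ l,
        K ≤ ∑ k ∈ Finset.range n, ENNReal.ofReal (c j (π k) (π (k + 1))) + f j (π n) ∧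
        (((G.mstate s (G.outHist prof' n)).1 = none ∧ ∀ m ≤ n, π m = ρ m) ∨
          (G.mstate s (G.outHist prof' n)).1 = some j) := by
      intro n
      induction n with
      | zero =>
        intro _
        refine ⟨?_, Or.inl ⟨rfl, fun m hm => ?_⟩⟩
        · exact hK1 0 (by simp)
        · obtain rfl : m = 0 := by omega
          rfl
      | succ n ih =>
        intro hn
        obtain ⟨ih1, ih2⟩ := ih (by omega)
        have hng : π n ∉ G.goal j := hlm n (by omega)
        have hown : G.owner (π n) ≠ j →
            π (n + 1) = mact s t (G.mstate s (G.outHist prof' n)) := by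
          intro ho
          rw [hπ, outcome_succ, hprof', Function.update_of_ne ho]
        -- a sufficient condition for the cost bound
        have hstep : f j (π n) ≤ ENNReal.ofReal (c j (π n) (π (n + 1))) + f j (π (n + 1)) →
            K ≤ ∑ k ∈ Finset.range (n + 1), ENNReal.ofReal (c j (π k) (π (k + 1)))
              + f j (π (n + 1)) := by
          intro h
          rw [Finset.sum_range_succ, add_assoc]
          exact ih1.trans (add_le_add le_rfl h)
        have hmine : G.owner (π n) = j →
            f j (π n) ≤ ENNReal.ofReal (c j (π n) (π (n + 1))) + f j (π (n + 1)) := by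
          intro ho
          rw [hfmin j _ hng ho]
          exact iInf_le (fun w : {w // G.E (π n) w} =>
            ENNReal.ofReal (c j (π n) w) + f j w) ⟨_, hπE n⟩
        have hst := mstate_outHist_succ G s prof' hp' n
        have h2 := hsnd n
        rcases ih2 with ⟨hnone, hag⟩ | hsome
        · by_cases hdev : π (n + 1) = s (π n)
          · have hag' : ∀ m ≤ n + 1, π m = ρ m := by
              intro m hm
              rcases Nat.lt_or_ge n m with h | h
              · obtain rfl : m = n + 1 := by omega
                rw [hdev, (hρs n).2, hag n le_rfl]
              · exact hag m h
            refine ⟨?_, Or.inl ⟨?_, hag'⟩⟩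
            · have := hK1 (n + 1) (fun m hm => by
                rw [← hag' m (by omega)]; exact hlm m (by omega))
              rw [hag' (n + 1) le_rfl]
              refine this.trans (add_le_add (le_of_eq (Finset.sum_congr rfl fun k hk => ?_)) le_rfl)
              rw [Finset.mem_range] at hk
              rw [hag' k (by omega), hag' (k + 1) (by omega)]
            · rw [hst]
              simp only [mstep, hnone]
              rw [h2, if_pos]
              exact hdev
          · have ho : G.owner (π n) = j := by
              by_contra ho
              apply hdev
              rw [hown ho]
              simp only [mact, hnone]
              rw [h2]
            refine ⟨hstep (hmine ho), Or.inr ?_⟩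
            rw [hst]
            simp only [mstep, hnone]
            rw [h2, if_neg hdev, ho]
        · refine ⟨hstep ?_, Or.inr ?_⟩
          · by_cases ho : G.owner (π n) = j
            · exact hmine ho
            · have h3 := hown ho
              simp only [mact, hsome] at h3
              rw [h2] at h3
              rw [h3]
              exact (htv j _ hng ho).ge
          · rw [hst]
            simp only [mstep, hsome]
    have hKl := (main l le_rfl).1
    rw [hf0 j _ hlg, add_zero] at hKl
    have hnn : ∀ (ξ : ℕ → V), (∀ k, G.E (ξ k) (ξ (k + 1))) → ∀ n,
        ∑ k ∈ Finset.range n, ENNReal.ofReal (c j (ξ k) (ξ (k + 1))) =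
        ENNReal.ofReal (∑ k ∈ Finset.range n, c j (ξ k) (ξ (k + 1))) := fun ξ hξ n =>
      (ENNReal.ofReal_sum_of_nonneg fun k _ => (hc _ _ _ (hξ k)).le).symm
    rw [hnn π hπE] at hKl
    obtain ⟨L, hL1, hL2, hL3⟩ := hK2 (ne_top_of_le_ne_top ENNReal.ofReal_ne_top hKl)
    rw [wCost_of_hit G c j ρ L hL1 hL2]
    rw [hL3, hnn ρ hρE, ENNReal.ofReal_le_ofReal_iff
      (Finset.sum_nonneg fun k _ => (hc _ _ _ (hπE k)).le)] at hKl
    exact WithTop.coe_le_coe.2 hKl
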